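/- Let γ > 0, t > 0, q₀ ∈ (0,1), p₀ ∈ ℝ, and define ρ(t,q,p) = Σ_{n ∈ ℤ} [ F(t,q,p; q₀ + 2n, p₀) + F(t,q,p; −q₀ + 2n, −p₀) ], where the sum is over all integers n. Then ρ satisfies the specular boundary conditions ρ(t, 0, p) = ρ(t, 0, −p) and ρ(t, 1, p) = ρ(t, 1, −p) for all p ∈ ℝ. -/

import Mathlib

open Matrix in
/-- Covariance matrix `Σ(t)` of the Gaussian fundamental solution of the kinetic
Fokker–Planck equation of 1D Langevin dynamics with constant potential and `β = 1`. -/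
noncomputable def covMat (γ t : ℝ) : Matrix (Fin 2) (Fin 2) ℝ :=
  !![(2 / γ ^ 2) * (γ * t - 3 / 2 + 2 * Real.exp (-γ * t) - Real.exp (-2 * γ * t) / 2),
     (1 - Real.exp (-γ * t)) ^ 2 / γ;
     (1 - Real.exp (-γ * t)) ^ 2 / γ,
     1 - Real.exp (-2 * γ * t)]

/-- Mean vector `M(t,q₀,p₀)` of the Gaussian fundamental solution. -/
noncomputable def meanVec (γ t q₀ p₀ : ℝ) : Fin 2 → ℝ :=
  ![q₀ + p₀ * (1 - Real.exp (-γ * t)) / γ, p₀ * Real.exp (-γ * t)]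

open Matrix in
/-- The Gaussian fundamental solution
`F(t,q,p;q₀,p₀) = (2π √(det Σ(t)))⁻¹ exp(−½ (z−M)ᵀ Σ(t)⁻¹ (z−M))` with `z = (q,p)`. -/
noncomputable def Fsol (γ t q p q₀ p₀ : ℝ) : ℝ :=
  (2 * Real.pi * Real.sqrt (covMat γ t).det)⁻¹ *
    Real.exp (-(1 / 2) *
      ((![q, p] - meanVec γ t q₀ p₀) ⬝ᵥ ((covMat γ t)⁻¹ *ᵥ (![q, p] - meanVec γ t q₀ p₀))))

/-!
Passing to the point `(c - q, -p)` of phase space and to the source `(c - q₀, -p₀)` changes the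
sign of the displacement `z - M`, and a centred Gaussian is even, so `F` is unchanged. When
`c = 2kL` is twice the position of a wall, this point reflection permutes the images, exchanging
the two families `q₀ + 2nL` and `-q₀ + 2(k - n)L`. Hence it preserves the image series; at the
wall `q = kL` it fixes `q` and flips `p`.
-/

section Images

variable {Q P E : Type*}

/-- Invariance of a phase-space kernel `K q p q₀ p₀` under the point reflections
`(q, p) ↦ (c - q, -p)` applied to target and source at once. Letting `c` vary packages the
symmetry about `q = 0` together with translation invariance in position. -/
def IsPointReflectionInvariant [Sub Q] [Neg P] (K : Q → P → Q → P → E) : Prop :=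
  ∀ c q p q₀ p₀, K (c - q) (-p) (c - q₀) (-p₀) = K q p q₀ p₀

/-- The method-of-images series of a kernel `K` for a source `(q₀, p₀)` between specularly
reflecting walls at the multiples of `L`: the images are `(±q₀ + 2nL, ±p₀)`. The sum is
unconditional, so it has the value `0` when the series is not summable. -/
noncomputable def imageSeries [AddGroup Q] [Neg P] [AddCommMonoid E] [TopologicalSpace E]
    (K : Q → P → Q → P → E) (L q₀ : Q) (p₀ : P) (q : Q) (p : P) : E :=
  ∑' n : ℤ, (K q p (q₀ + n • (2 • L)) p₀ + K q p (-q₀ + n • (2 • L)) (-p₀))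

variable [AddCommGroup Q] [InvolutiveNeg P] [AddCommMonoid E] [TopologicalSpace E]

theorem IsPointReflectionInvariant.imageSeries_sub_neg {K : Q → P → Q → P → E}
    (hK : IsPointReflectionInvariant K) (L q₀ : Q) (p₀ : P) (k : ℤ) (q : Q) (p : P) :
    imageSeries K L q₀ p₀ (k • (2 • L) - q) (-p) = imageSeries K L q₀ p₀ q p := by
  unfold imageSeries
  rw [← (Equiv.subLeft k).tsum_eq]
  refine tsum_congr fun n => ?_
  have image_of_neg : q₀ + (k - n) • (2 • L) = k • (2 • L) - (-q₀ + n • (2 • L)) := by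
    rw [sub_zsmul]; abel
  have image_of_pos : -q₀ + (k - n) • (2 • L) = k • (2 • L) - (q₀ + n • (2 • L)) := by
    rw [sub_zsmul]; abel
  have reflect_neg := hK (k • (2 • L)) q p (-q₀ + n • (2 • L)) (-p₀)
  have reflect_pos := hK (k • (2 • L)) q p (q₀ + n • (2 • L)) p₀
  rw [neg_neg] at reflect_neg
  rw [Equiv.subLeft_apply, image_of_neg, image_of_pos, reflect_neg, reflect_pos, add_comm]

theorem stmt7_general {K : Q → P → Q → P → E} (hK : IsPointReflectionInvariant K)
    (L q₀ : Q) (p₀ : P) (k : ℤ) (p : P) :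
    imageSeries K L q₀ p₀ (k • L) p = imageSeries K L q₀ p₀ (k • L) (-p) := by
  have wall_fixed : k • (2 • L) - k • L = k • L := by
    rw [two_nsmul, zsmul_add, add_sub_cancel_right]
  rw [← hK.imageSeries_sub_neg L q₀ p₀ k, wall_fixed]

end Images

theorem sub_meanVec_reflect (γ t c q p q₀ p₀ : ℝ) :
    ![c - q, -p] - meanVec γ t (c - q₀) (-p₀) = -(![q, p] - meanVec γ t q₀ p₀) := by
  ext i
  fin_cases i <;> simp [meanVec] <;> ring

theorem isPointReflectionInvariant_Fsol (γ t : ℝ) : IsPointReflectionInvariant (Fsol γ t) := by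
  intro c q p q₀ p₀
  unfold Fsol
  rw [sub_meanVec_reflect, Matrix.mulVec_neg, neg_dotProduct_neg]

/-- The method-of-images series
`ρ(t,q,p) = Σ_{n ∈ ℤ} [F(t,q,p; q₀+2n, p₀) + F(t,q,p; −q₀+2n, −p₀)]` satisfies the
specular boundary conditions `ρ(t,0,p) = ρ(t,0,−p)` and `ρ(t,1,p) = ρ(t,1,−p)`. -/
theorem stmt7 (γ t q₀ p₀ : ℝ) (hγ : 0 < γ) (ht : 0 < t) (hq₀ : q₀ ∈ Set.Ioo (0 : ℝ) 1)
    (ρ : ℝ → ℝ → ℝ → ℝ)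
    (hρ : ∀ s q p, ρ s q p =
      ∑' n : ℤ, (Fsol γ s q p (q₀ + 2 * n) p₀ + Fsol γ s q p (-q₀ + 2 * n) (-p₀))) :
    (∀ p : ℝ, ρ t 0 p = ρ t 0 (-p)) ∧ (∀ p : ℝ, ρ t 1 p = ρ t 1 (-p)) := by
  have hρ' (q p : ℝ) : ρ t q p = imageSeries (Fsol γ t) 1 q₀ p₀ q p := by
    simp [hρ, imageSeries, mul_comm]
  have hwall := stmt7_general (isPointReflectionInvariant_Fsol γ t) 1 q₀ p₀
  exact ⟨by simpa [hρ'] using hwall 0, by simpa [hρ'] using hwall 1⟩
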